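/- Let x_1 < x_2 < x_3 < x_4 be real numbers and let θ̂ = μ̂ + iσ̂ ∈ ℍ maximize the Cauchy likelihood of (x_1, x_2, x_3, x_4) over ℍ. Then F(x_3; θ̂) − F(x_1; θ̂) = 1/2 and F(x_4; θ̂) − F(x_2; θ̂) = 1/2, where F(x; μ + iσ) = 1/2 + (1/π)·arctan((x − μ)/σ). -/

import Mathlib

open Complex Finset

/-- The Cauchy likelihood of the sample `x` at parameter `θ = μ + iσ`. -/
noncomputable def cauchyL {n : ℕ} (x : Fin n → ℝ) (θ : ℂ) : ℝ :=
  ∏ j, (θ.im / Real.pi) / ((x j - θ.re) ^ 2 + θ.im ^ 2)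

/-- Cumulative distribution function of the Cauchy distribution with parameter `θ = μ + iσ`. -/
noncomputable def cauchyCDF (xv : ℝ) (θ : ℂ) : ℝ :=
  1 / 2 + (1 / Real.pi) * Real.arctan ((xv - θ.re) / θ.im)

/-!
The Cayley transform `w = (t - θ) / (t - conj θ)` maps the real line into the unit circle, and the
derivative of the log-likelihood at `θ` in the direction `v` is `Im (v * conj W) / Im θ`, where `W`
is the sum of the transforms of the observations. So `W = 0` at a critical point. Four points of
the unit circle with sum `0` also have inverses with sum `0`, so they form two antipodal pairs. For
the transforms of `x₁ < x₂ < x₃ < x₄` the pairs can only be `{x₁, x₃}` and `{x₂, x₄}`, and `s < t`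
are antipodal exactly when `(s - μ) / σ` and `(t - μ) / σ` have product `-1`, that is, when their
arctangents differ by `π / 2`.
-/

open ComplexConjugate

theorem add_eq_zero_or_of_sum_eq_zero_of_sum_inv_eq_zero {K : Type*} [Field K] {a b c d : K}
    (ha : a ≠ 0) (hb : b ≠ 0) (hc : c ≠ 0) (hd : d ≠ 0) (hsum : a + b + c + d = 0)
    (hinv : a⁻¹ + b⁻¹ + c⁻¹ + d⁻¹ = 0) : a + b = 0 ∨ a + c = 0 ∨ a + d = 0 := by
  have hesymm : b * c * d + a * c * d + a * b * d + a * b * c = 0 := by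
    field_simp at hinv
    linear_combination hinv
  have hprod : (a + b) * ((a + c) * (a + d)) = 0 := by
    linear_combination a ^ 2 * hsum + hesymm
  simpa only [mul_eq_zero] using hprod

/-- The Cayley transform of the upper half-plane that sends `θ` to `0`, at the real point `t`. -/
noncomputable def cayley (θ : ℂ) (t : ℝ) : ℂ := (t - θ) / (t - conj θ)

theorem inv_cayley (θ : ℂ) (t : ℝ) : (cayley θ t)⁻¹ = conj (cayley θ t) := by
  simp [cayley]

theorem cayley_im (θ : ℂ) (t : ℝ) :
    (cayley θ t).im = -(2 * θ.im * (t - θ.re)) / ((t - θ.re) ^ 2 + θ.im ^ 2) := by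
  simp only [cayley, div_im, normSq_apply, sub_re, sub_im, ofReal_re, ofReal_im, conj_re, conj_im,
    zero_sub, neg_neg, ← pow_two]
  ring

section Cayley

variable {θ : ℂ}

theorem ofReal_sub_ne_zero (hθ : θ.im ≠ 0) (t : ℝ) : (t : ℂ) - θ ≠ 0 := fun h ↦
  hθ (by simpa using congrArg im h)

theorem ofReal_sub_conj_ne_zero (hθ : θ.im ≠ 0) (t : ℝ) : (t : ℂ) - conj θ ≠ 0 :=
  ofReal_sub_ne_zero (by simpa using hθ) t

theorem cayley_ne_zero (hθ : θ.im ≠ 0) (t : ℝ) : cayley θ t ≠ 0 :=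
  div_ne_zero (ofReal_sub_ne_zero hθ t) (ofReal_sub_conj_ne_zero hθ t)

theorem cayley_re (hθ : θ.im ≠ 0) (t : ℝ) :
    (cayley θ t).re = 1 - 2 * θ.im ^ 2 / ((t - θ.re) ^ 2 + θ.im ^ 2) := by
  have hden : (t - θ.re) ^ 2 + θ.im ^ 2 ≠ 0 := by positivity
  simp only [cayley, div_re, normSq_apply, sub_re, sub_im, ofReal_re, ofReal_im, conj_re, conj_im,
    zero_sub, neg_neg, ← pow_two]
  field_simp
  ring

theorem cayley_add_cayley_eq_zero_iff (hθ : θ.im ≠ 0) (s t : ℝ) :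
    cayley θ s + cayley θ t = 0 ↔ (s - θ.re) * (t - θ.re) = -θ.im ^ 2 := by
  have hs := ofReal_sub_conj_ne_zero hθ s
  have ht := ofReal_sub_conj_ne_zero hθ t
  have hnum : (s - θ) * (t - conj θ) + (s - conj θ) * (t - θ) =
      ((2 * ((s - θ.re) * (t - θ.re) + θ.im ^ 2) : ℝ) : ℂ) := by
    apply Complex.ext <;> simp [pow_two] <;> ring
  rw [cayley, cayley, div_add_div _ _ hs ht, div_eq_zero_iff, or_iff_left (mul_ne_zero hs ht), hnum,
    ofReal_eq_zero, mul_eq_zero_iff_left two_ne_zero, eq_neg_iff_add_eq_zero]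

theorem re_mem_Ioo_of_cayley_add_cayley_eq_zero (hθ : θ.im ≠ 0) {s t : ℝ} (hst : s < t)
    (h : cayley θ s + cayley θ t = 0) : θ.re ∈ Set.Ioo s t := by
  have hneg : (s - θ.re) * (t - θ.re) < 0 := by
    rw [(cayley_add_cayley_eq_zero_iff hθ s t).mp h]
    exact neg_neg_of_pos (by positivity)
  rcases mul_neg_iff.mp hneg with ⟨hs, ht⟩ | ⟨hs, ht⟩
  · linarith
  · exact ⟨sub_neg.mp hs, sub_pos.mp ht⟩

theorem cayley_add_cayley_eq_zero_of_lt_of_sum_eq_zero (hθ : θ.im ≠ 0) {x₁ x₂ x₃ x₄ : ℝ}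
    (h12 : x₁ < x₂) (h23 : x₂ < x₃) (h34 : x₃ < x₄)
    (hsum : cayley θ x₁ + cayley θ x₂ + cayley θ x₃ + cayley θ x₄ = 0) :
    cayley θ x₁ + cayley θ x₃ = 0 ∧ cayley θ x₂ + cayley θ x₄ = 0 := by
  have hinv : (cayley θ x₁)⁻¹ + (cayley θ x₂)⁻¹ + (cayley θ x₃)⁻¹ + (cayley θ x₄)⁻¹ = 0 := by
    simpa only [inv_cayley, map_add, map_zero] using congrArg conj hsum
  rcases add_eq_zero_or_of_sum_eq_zero_of_sum_inv_eq_zero (cayley_ne_zero hθ x₁)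
    (cayley_ne_zero hθ x₂) (cayley_ne_zero hθ x₃) (cayley_ne_zero hθ x₄) hsum hinv
    with h | h | h
  · have h₃₄ : cayley θ x₃ + cayley θ x₄ = 0 := by linear_combination hsum - h
    exact absurd h23 ((re_mem_Ioo_of_cayley_add_cayley_eq_zero hθ h34 h₃₄).1.trans
      (re_mem_Ioo_of_cayley_add_cayley_eq_zero hθ h12 h).2).not_gt
  · exact ⟨h, by linear_combination hsum - h⟩
  · have h₂₃ : cayley θ x₂ + cayley θ x₃ = 0 := by linear_combination hsum - h
    obtain ⟨hx₂, hx₃⟩ := re_mem_Ioo_of_cayley_add_cayley_eq_zero hθ h23 h₂₃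
    rw [cayley_add_cayley_eq_zero_iff hθ] at h h₂₃
    have hlt : (θ.re - x₂) * (x₃ - θ.re) < (θ.re - x₁) * (x₄ - θ.re) :=
      mul_lt_mul'' (by gcongr) (by gcongr) (sub_nonneg.mpr hx₂.le) (sub_nonneg.mpr hx₃.le)
    linarith

end Cayley

/-- The density at `t` of the Cauchy distribution with parameter `θ = μ + iσ`, named so that the
likelihood can be treated as a product of densities. -/
noncomputable def cauchyDensity (t : ℝ) (θ : ℂ) : ℝ :=
  (θ.im / Real.pi) / ((t - θ.re) ^ 2 + θ.im ^ 2)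

theorem cauchyL_eq_prod_cauchyDensity {n : ℕ} (x : Fin n → ℝ) :
    cauchyL x = fun θ ↦ ∏ j, cauchyDensity (x j) θ :=
  rfl

section Likelihood

variable {θ : ℂ}

theorem cauchyDensity_ne_zero (hθ : θ.im ≠ 0) (t : ℝ) : cauchyDensity t θ ≠ 0 := by
  unfold cauchyDensity
  positivity

theorem differentiableAt_cauchyDensity (hθ : θ.im ≠ 0) (t : ℝ) :
    DifferentiableAt ℝ (cauchyDensity t) θ := by
  have hre := differentiable_re θ
  have him := differentiable_im θ
  unfold cauchyDensity
  fun_prop (disch := positivity)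

theorem differentiableAt_cauchyL (hθ : θ.im ≠ 0) {n : ℕ} (x : Fin n → ℝ) :
    DifferentiableAt ℝ (cauchyL x) θ := by
  rw [cauchyL_eq_prod_cauchyDensity]
  exact (HasFDerivAt.finsetProd fun j _ ↦
    (differentiableAt_cauchyDensity hθ (x j)).hasFDerivAt).differentiableAt

theorem logDeriv_cauchyDensity_line (hθ : θ.im ≠ 0) (v : ℂ) (t : ℝ) :
    logDeriv (fun r : ℝ ↦ cauchyDensity t (θ + r • v)) 0 =
      (v * conj (cayley θ t)).im / θ.im := by
  have hre : HasDerivAt (fun r : ℝ ↦ (θ + r • v).re) v.re 0 := by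
    simpa using ((hasDerivAt_id (0 : ℝ)).mul_const v.re).const_add θ.re
  have him : HasDerivAt (fun r : ℝ ↦ (θ + r • v).im) v.im 0 := by
    simpa using ((hasDerivAt_id (0 : ℝ)).mul_const v.im).const_add θ.im
  have hden : (t - θ.re) ^ 2 + θ.im ^ 2 ≠ 0 := by positivity
  have hderiv := (him.div_const Real.pi).fun_div
    (((hre.const_sub t).fun_pow 2).fun_add (him.fun_pow 2)) (by simpa using hden)
  simp only [logDeriv_apply, cauchyDensity, hderiv.deriv, mul_im, conj_re, conj_im,
    cayley_re hθ, cayley_im, zero_smul, add_zero]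
  field_simp
  ring

theorem logDeriv_cauchyL_line (hθ : θ.im ≠ 0) {n : ℕ} (x : Fin n → ℝ) (v : ℂ) :
    logDeriv (fun r : ℝ ↦ cauchyL x (θ + r • v)) 0 =
      (v * conj (∑ j, cayley θ (x j))).im / θ.im := by
  have hne (j : Fin n) : cauchyDensity (x j) (θ + (0 : ℝ) • v) ≠ 0 := by
    rw [zero_smul, add_zero]
    exact cauchyDensity_ne_zero hθ (x j)
  have hdiff (j : Fin n) :
      DifferentiableAt ℝ (fun r : ℝ ↦ cauchyDensity (x j) (θ + r • v)) 0 := by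
    refine DifferentiableAt.comp (g := cauchyDensity (x j)) 0 ?_ (by fun_prop)
    simpa using differentiableAt_cauchyDensity hθ (x j)
  simp only [cauchyL_eq_prod_cauchyDensity]
  rw [logDeriv_prod (f := fun j (r : ℝ) ↦ cauchyDensity (x j) (θ + r • v))
    (fun j _ ↦ hne j) fun j _ ↦ hdiff j]
  simp only [logDeriv_cauchyDensity_line hθ, map_sum, mul_sum, im_sum, sum_div]

theorem sum_cayley_eq_zero_of_fderiv_cauchyL_eq_zero (hθ : θ.im ≠ 0) {n : ℕ} {x : Fin n → ℝ}
    (hcrit : fderiv ℝ (cauchyL x) θ = 0) : ∑ j, cayley θ (x j) = 0 := by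
  -- In the direction `I * W` the log-likelihood has derivative `normSq W / θ.im`.
  set W := ∑ j, cayley θ (x j)
  have hline : lineDeriv ℝ (cauchyL x) θ (I * W) = 0 := by
    rw [(differentiableAt_cauchyL hθ x).lineDeriv_eq_fderiv, hcrit, zero_apply]
  have hscore : (I * W * conj W).im / θ.im = 0 := by
    rw [← logDeriv_cauchyL_line hθ, logDeriv_apply, ← lineDeriv, hline, zero_div]
  rw [mul_assoc, mul_conj, I_mul_im, ofReal_re, div_eq_zero_iff, or_iff_left hθ] at hscore
  exact normSq_eq_zero.mp hscore

end Likelihood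

theorem cauchyCDF_sub_eq_half_of_cayley_add_cayley_eq_zero {θ : ℂ} (hθ : 0 < θ.im) {s t : ℝ}
    (hst : s < t) (h : cayley θ s + cayley θ t = 0) : cauchyCDF t θ - cauchyCDF s θ = 1 / 2 := by
  have hs : s - θ.re < 0 :=
    sub_neg.mpr (re_mem_Ioo_of_cayley_add_cayley_eq_zero hθ.ne' hst h).1
  rw [cayley_add_cayley_eq_zero_iff hθ.ne'] at h
  have hpos : 0 < -((s - θ.re) / θ.im) := neg_pos.mpr (div_neg_of_neg_of_pos hs hθ)
  have hrecip : (t - θ.re) / θ.im = (-((s - θ.re) / θ.im))⁻¹ := by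
    apply eq_inv_of_mul_eq_one_left
    field_simp
    linear_combination -h
  have harctan : Real.arctan ((t - θ.re) / θ.im) =
      Real.pi / 2 + Real.arctan ((s - θ.re) / θ.im) := by
    rw [hrecip, Real.arctan_inv_of_pos hpos, Real.arctan_neg, sub_neg_eq_add]
  rw [cauchyCDF, cauchyCDF, harctan]
  field_simp
  ring

theorem stmt_17_general {x₁ x₂ x₃ x₄ : ℝ} {θ : ℂ} (h12 : x₁ < x₂) (h23 : x₂ < x₃) (h34 : x₃ < x₄)
    (hθ : 0 < θ.im) (hcrit : fderiv ℝ (cauchyL ![x₁, x₂, x₃, x₄]) θ = 0) :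
    cauchyCDF x₃ θ - cauchyCDF x₁ θ = 1 / 2 ∧ cauchyCDF x₄ θ - cauchyCDF x₂ θ = 1 / 2 := by
  have hsum : cayley θ x₁ + cayley θ x₂ + cayley θ x₃ + cayley θ x₄ = 0 := by
    simpa [Fin.sum_univ_four] using sum_cayley_eq_zero_of_fderiv_cauchyL_eq_zero hθ.ne' hcrit
  obtain ⟨h13, h24⟩ := cayley_add_cayley_eq_zero_of_lt_of_sum_eq_zero hθ.ne' h12 h23 h34 hsum
  exact ⟨cauchyCDF_sub_eq_half_of_cayley_add_cayley_eq_zero hθ (h12.trans h23) h13,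
    cauchyCDF_sub_eq_half_of_cayley_add_cayley_eq_zero hθ (h23.trans h34) h24⟩

theorem stmt_17 (x₁ x₂ x₃ x₄ : ℝ) (h12 : x₁ < x₂) (h23 : x₂ < x₃) (h34 : x₃ < x₄)
    (θhat : ℂ) (hθhat : 0 < θhat.im)
    (hmax : ∀ θ : ℂ, 0 < θ.im →
      cauchyL ![x₁, x₂, x₃, x₄] θ ≤ cauchyL ![x₁, x₂, x₃, x₄] θhat) :
    cauchyCDF x₃ θhat - cauchyCDF x₁ θhat = 1 / 2 ∧
      cauchyCDF x₄ θhat - cauchyCDF x₂ θhat = 1 / 2 :=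
  have hlocal : IsLocalMax (cauchyL ![x₁, x₂, x₃, x₄]) θhat :=
    IsMaxOn.isLocalMax hmax (UpperHalfPlane.isOpen_upperHalfPlaneSet.mem_nhds hθhat)
  stmt_17_general h12 h23 h34 hθhat hlocal.fderiv_eq_zero
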